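/- arXiv:1305.7473 — 3 statements merged into one kernel-verified Lean document; each statement's English description precedes it below -/
import Mathlib

section
/- Let G be a finite loopless directed graph that admits an h-local r-multi-coloring for some positive integers r < h. Then the fractional chromatic number of the underlying undirected graph satisfies χ*(G) ≤ (h/r)^{h/r} / (h/r − 1)^{h/r − 1}, where the powers are real powers. -/
open Classical

/-- The underlying undirected simple graph of a digraph given by an arc relation `D`. -/
def underlying {V : Type*} (D : V → V → Prop) : SimpleGraph V := SimpleGraph.fromRel D

/-- `A` is an independent set of the simple graph `G`. -/
def IsIndepF {V : Type*} (G : SimpleGraph V) (A : Finset V) : Prop :=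
  ∀ u ∈ A, ∀ v ∈ A, ¬ G.Adj u v

/-- A fractional coloring of `G`: nonnegative weights on the independent sets of `G` such
that the sets containing any fixed vertex have total weight at least `1`. -/
structure FracColoring {V : Type*} [Fintype V] (G : SimpleGraph V) where
  x : Finset V → ℝ
  nonneg : ∀ A, 0 ≤ x A
  supp : ∀ A, x A ≠ 0 → IsIndepF G A
  cover : ∀ v : V, 1 ≤ ∑ A : Finset V, if v ∈ A then x A else 0

/-- The total weight of a fractional coloring. -/
noncomputable def totalWeight {V : Type*} [Fintype V] {G : SimpleGraph V}
    (f : FracColoring G) : ℝ :=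
  ∑ A : Finset V, f.x A

/-- The fractional chromatic number `χ*(G)`: the minimum total weight of a fractional
coloring of `G`. -/
noncomputable def fracChrom {V : Type*} [Fintype V] (G : SimpleGraph V) : ℝ :=
  sInf {w : ℝ | ∃ f : FracColoring G, w = totalWeight f}

/-- The local weight of a fractional coloring of a digraph `D`:
`1` plus the maximum over vertices `v` of the total weight of the independent sets meeting
the out-neighborhood of `v`. -/
noncomputable def localWeight {V : Type*} [Fintype V] (D : V → V → Prop)
    (f : FracColoring (underlying D)) : ℝ :=
  1 + ⨆ v : V, ∑ A : Finset V, if ∃ u ∈ A, D v u then f.x A else 0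

/-- The fractional directed local chromatic number `ψ_d*(D)`: the minimum local weight of a
fractional coloring of `D`. -/
noncomputable def fracDirLocal {V : Type*} [Fintype V] (D : V → V → Prop) : ℝ :=
  sInf {w : ℝ | ∃ f : FracColoring (underlying D), w = localWeight D f}

/-- An `r`-multi-coloring of a digraph: every vertex gets `r` colors, and each color class
is an independent set of the underlying undirected graph. -/
def IsMultiColoring {V C : Type*} (D : V → V → Prop) (r : ℕ) (χ : V → Finset C) : Prop :=
  (∀ v, (χ v).card = r) ∧
  ∀ (c : C) (u v : V), c ∈ χ u → c ∈ χ v → ¬ (underlying D).Adj u v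

/-- An `h`-local `r`-multi-coloring: an `r`-multi-coloring in which the colors appearing on
any out-neighborhood number at most `h - r`. -/
def IsHLocalMulti {V C : Type*} [Fintype V] (D : V → V → Prop) (h r : ℕ)
    (χ : V → Finset C) : Prop :=
  IsMultiColoring D r χ ∧
  ∀ v, ((Finset.univ.filter (fun u => D v u)).biUnion χ).card ≤ h - r

/-!
Fix `t ∈ (0, 1)` and pick a random set `S` of colors, omitting each color independently with
probability `t`. The vertices `v` that own a color of `S` while no out-neighbor of `v` does form
an independent set: an arc between two of them would give the tail an out-neighbor owning a color
of `S`. As `v` shares no color with its out-neighbors, it is selected with probability at least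
`t ^ (h - r) * (1 - t ^ r)`, so `χ*` is at most the inverse of this quantity. The best choice of
`t` is given by `t ^ r = 1 - r / h`.
-/

section RandomSubset

variable {α R : Type*} [DecidableEq α]

lemma sum_powerset_filter_disjoint_pow_mul_pow [CommSemiring R] (a b : R) {K Y : Finset α}
    (hY : Y ⊆ K) :
    ∑ S ∈ K.powerset with Disjoint S Y, a ^ S.card * b ^ (K.card - S.card) =
      (a + b) ^ (K \ Y).card * b ^ Y.card := by
  have hfilter : K.powerset.filter (Disjoint · Y) = (K \ Y).powerset := by
    ext S
    simp only [Finset.mem_filter, Finset.mem_powerset, Finset.subset_sdiff]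
  rw [hfilter, ← Finset.sum_pow_mul_eq_add_pow, Finset.sum_mul]
  refine Finset.sum_congr rfl fun S hS ↦ ?_
  have hcard : S.card ≤ (K \ Y).card := Finset.card_le_card (Finset.mem_powerset.1 hS)
  have hK : (K \ Y).card + Y.card = K.card := Finset.card_sdiff_add_card_eq_card hY
  rw [mul_assoc, ← pow_add, ← hK, Nat.sub_add_comm hcard]

lemma sum_powerset_filter_disjoint_not_disjoint_pow_mul_pow [CommRing R] (t : R)
    {K Y Z : Finset α} (hY : Y ⊆ K) (hZ : Z ⊆ K) (hYZ : Disjoint Y Z) :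
    ∑ S ∈ K.powerset with Disjoint S Y ∧ ¬ Disjoint S Z,
        (1 - t) ^ S.card * t ^ (K.card - S.card) =
      t ^ Y.card * (1 - t ^ Z.card) := by
  have havoidY := sum_powerset_filter_disjoint_pow_mul_pow (1 - t) t hY
  have havoidYZ := sum_powerset_filter_disjoint_pow_mul_pow (1 - t) t (Finset.union_subset hY hZ)
  rw [sub_add_cancel, one_pow, one_mul] at havoidY havoidYZ
  rw [Finset.card_union_of_disjoint hYZ, pow_add] at havoidYZ
  simp only [Finset.disjoint_union_right] at havoidYZ
  rw [← Finset.sum_filter_add_sum_filter_not _ (Disjoint · Z), Finset.filter_filter,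
    Finset.filter_filter, havoidYZ] at havoidY
  rw [mul_one_sub]
  exact eq_sub_of_add_eq' havoidY

end RandomSubset

section FractionalColoring

variable {V ι : Type*} [Fintype V] {G : SimpleGraph V} {P : Finset ι} {w : ι → ℝ}
  {F : ι → Finset V}

lemma fracChrom_le_totalWeight (f : FracColoring G) : fracChrom G ≤ totalWeight f := by
  refine csInf_le ⟨0, ?_⟩ ⟨f, rfl⟩
  rintro _ ⟨g, rfl⟩
  exact Finset.sum_nonneg fun A _ ↦ g.nonneg A

/-- The fractional coloring induced by a weighted family of independent sets: the weight of a set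
is the sum of the weights of its occurrences in the family. -/
noncomputable def FracColoring.ofFamily (hw : ∀ i ∈ P, 0 ≤ w i) (hF : ∀ i ∈ P, IsIndepF G (F i))
    (hcover : ∀ v, 1 ≤ ∑ i ∈ P with v ∈ F i, w i) : FracColoring G where
  x A := ∑ i ∈ P with F i = A, w i
  nonneg A := Finset.sum_nonneg fun i hi ↦ hw i (Finset.mem_filter.1 hi).1
  supp A hA := by
    obtain ⟨i, hi, -⟩ := Finset.exists_ne_zero_of_sum_ne_zero hA
    obtain ⟨hiP, rfl⟩ := Finset.mem_filter.1 hi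
    exact hF i hiP
  cover v := by
    calc 1 ≤ ∑ i ∈ P with v ∈ F i, w i := hcover v
      _ = ∑ A, ∑ i ∈ P with v ∈ F i ∧ F i = A, w i := by
        simp only [← Finset.filter_filter, Finset.sum_fiberwise]
      _ = ∑ A, if v ∈ A then ∑ i ∈ P with F i = A, w i else 0 := by
        refine Finset.sum_congr rfl fun A _ ↦ ?_
        split_ifs with hv
        · exact Finset.sum_congr (by grind) fun _ _ ↦ rfl
        · exact Finset.sum_eq_zero (by grind)

lemma FracColoring.totalWeight_ofFamily (hw : ∀ i ∈ P, 0 ≤ w i)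
    (hF : ∀ i ∈ P, IsIndepF G (F i)) (hcover : ∀ v, 1 ≤ ∑ i ∈ P with v ∈ F i, w i) :
    totalWeight (ofFamily hw hF hcover) = ∑ i ∈ P, w i :=
  Finset.sum_fiberwise P F w

lemma fracChrom_le_sum_div_of_family (hw : ∀ i ∈ P, 0 ≤ w i) (hF : ∀ i ∈ P, IsIndepF G (F i))
    {β : ℝ} (hβ : 0 < β) (hcover : ∀ v, β ≤ ∑ i ∈ P with v ∈ F i, w i) :
    fracChrom G ≤ (∑ i ∈ P, w i) / β := by
  have hw' : ∀ i ∈ P, 0 ≤ w i / β := fun i hi ↦ div_nonneg (hw i hi) hβ.le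
  have hcover' : ∀ v, 1 ≤ ∑ i ∈ P with v ∈ F i, w i / β := fun v ↦ by
    rw [← Finset.sum_div, one_le_div hβ]
    exact hcover v
  rw [Finset.sum_div, ← FracColoring.totalWeight_ofFamily hw' hF hcover']
  exact fracChrom_le_totalWeight _

end FractionalColoring

section ColorSelection

variable {V C : Type*} [Fintype V] {G : SimpleGraph V} {χ N : V → Finset C}

/-- The vertices selected by a set `S` of colors: those `v` that own a color of `S` while no color
of `S` is forbidden at `v`, where `χ v` and `N v` are the owned and the forbidden colors. -/
noncomputable def selectedVertices (χ N : V → Finset C) (S : Finset C) : Finset V :=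
  {v | Disjoint S (N v) ∧ ¬ Disjoint S (χ v)}

lemma mem_selectedVertices {S : Finset C} {v : V} :
    v ∈ selectedVertices χ N S ↔ Disjoint S (N v) ∧ ¬ Disjoint S (χ v) :=
  Finset.mem_filter_univ v

lemma isIndepF_selectedVertices (hN : ∀ u v, G.Adj u v → χ v ⊆ N u ∨ χ u ⊆ N v)
    (S : Finset C) : IsIndepF G (selectedVertices χ N S) := by
  intro u hu v hv huv
  rw [mem_selectedVertices] at hu hv
  rcases hN u v huv with hvN | huN
  · exact hv.2 (hu.1.mono_right hvN)
  · exact hu.2 (hv.1.mono_right huN)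

lemma fracChrom_le_one_div_of_forbidden_colors (hN : ∀ u v, G.Adj u v → χ v ⊆ N u ∨ χ u ⊆ N v)
    (hdisj : ∀ v, Disjoint (N v) (χ v)) {k r : ℕ} (hk : ∀ v, (N v).card ≤ k) (hr : r ≠ 0)
    (hχ : ∀ v, r ≤ (χ v).card) {t : ℝ} (ht₀ : 0 < t) (ht₁ : t < 1) :
    fracChrom G ≤ 1 / (t ^ k * (1 - t ^ r)) := by
  let K : Finset C := Finset.univ.biUnion fun v ↦ N v ∪ χ v
  have hK : ∀ v, N v ∪ χ v ⊆ K := fun v ↦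
    Finset.subset_biUnion_of_mem (fun v ↦ N v ∪ χ v) (Finset.mem_univ v)
  let weight : Finset C → ℝ := fun S ↦ (1 - t) ^ S.card * t ^ (K.card - S.card)
  have hweight : ∀ S ∈ K.powerset, 0 ≤ weight S := fun S _ ↦
    mul_nonneg (pow_nonneg (sub_nonneg.2 ht₁.le) _) (pow_nonneg ht₀.le _)
  have htotal : ∑ S ∈ K.powerset, weight S = 1 := by
    rw [Finset.sum_pow_mul_eq_add_pow, sub_add_cancel, one_pow]
  have htr : 0 < 1 - t ^ r := sub_pos.2 (pow_lt_one₀ ht₀.le ht₁ hr)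
  have hcover : ∀ v, t ^ k * (1 - t ^ r) ≤
      ∑ S ∈ K.powerset with v ∈ selectedVertices χ N S, weight S := fun v ↦ by
    simp only [mem_selectedVertices]
    rw [sum_powerset_filter_disjoint_not_disjoint_pow_mul_pow t
      (Finset.union_subset_left (hK v)) (Finset.union_subset_right (hK v)) (hdisj v)]
    have hforbidden : t ^ k ≤ t ^ (N v).card := pow_le_pow_of_le_one ht₀.le ht₁.le (hk v)
    have howned : t ^ (χ v).card ≤ t ^ r := pow_le_pow_of_le_one ht₀.le ht₁.le (hχ v)
    gcongr
  calc fracChrom G ≤ (∑ S ∈ K.powerset, weight S) / (t ^ k * (1 - t ^ r)) :=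
        fracChrom_le_sum_div_of_family hweight (fun S _ ↦ isIndepF_selectedVertices hN S)
          (by positivity) hcover
    _ = 1 / (t ^ k * (1 - t ^ r)) := by rw [htotal]

end ColorSelection

section LocalMultiColoring

variable {V C : Type*} [Fintype V] {D : V → V → Prop} {χ : V → Finset C}

/-- The colors `⋃_{w ∈ N₊(v)} χ(w)` appearing on the out-neighborhood of `v`. -/
noncomputable def outColors (D : V → V → Prop) (χ : V → Finset C) (v : V) : Finset C :=
  (Finset.univ.filter (fun u ↦ D v u)).biUnion χ

lemma subset_outColors {u v : V} (huv : D u v) : χ v ⊆ outColors D χ u :=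
  Finset.subset_biUnion_of_mem χ ((Finset.mem_filter_univ v).2 huv)

lemma subset_outColors_of_underlying_adj (u v : V) (huv : (underlying D).Adj u v) :
    χ v ⊆ outColors D χ u ∨ χ u ⊆ outColors D χ v :=
  huv.2.imp subset_outColors subset_outColors

lemma IsMultiColoring.disjoint_outColors {r : ℕ} (hχ : IsMultiColoring D r χ)
    (hloop : ∀ v, ¬ D v v) (v : V) : Disjoint (outColors D χ v) (χ v) := by
  refine Finset.disjoint_left.2 fun c hc hcv ↦ ?_
  obtain ⟨u, hu, hcu⟩ := Finset.mem_biUnion.1 hc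
  have hvu : D v u := (Finset.mem_filter_univ u).1 hu
  exact hχ.2 c v u hcv hcu ⟨fun h ↦ hloop v (h ▸ hvu), .inl hvu⟩

lemma IsHLocalMulti.fracChrom_le_one_div {h r : ℕ} (hχ : IsHLocalMulti D h r χ)
    (hloop : ∀ v, ¬ D v v) (hr : r ≠ 0) {t : ℝ} (ht₀ : 0 < t) (ht₁ : t < 1) :
    fracChrom (underlying D) ≤ 1 / (t ^ (h - r) * (1 - t ^ r)) :=
  fracChrom_le_one_div_of_forbidden_colors subset_outColors_of_underlying_adj
    (hχ.1.disjoint_outColors hloop) hχ.2 hr (fun v ↦ (hχ.1.1 v).ge) ht₀ ht₁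

end LocalMultiColoring

lemma one_div_one_sub_inv_rpow_mul_inv {x : ℝ} (hx : 1 ≤ x) :
    1 / ((1 - x⁻¹) ^ (x - 1) * x⁻¹) = x ^ x / (x - 1) ^ (x - 1) := by
  have hx₀ : 0 < x := one_pos.trans_le hx
  have hsub : 1 - x⁻¹ = (x - 1) / x := by field_simp
  have hpow : x ^ x = x ^ (x - 1) * x := by
    rw [← Real.rpow_add_one hx₀.ne', sub_add_cancel]
  rw [hsub, Real.div_rpow (sub_nonneg.2 hx) hx₀.le, hpow, one_div, mul_inv, inv_div, inv_inv,
    div_mul_eq_mul_div]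

lemma rpow_inv_natCast_pow_sub {p : ℝ} (hp : 0 ≤ p) {h r : ℕ} (hr : r ≠ 0) (hrh : r ≤ h) :
    (p ^ (r : ℝ)⁻¹) ^ (h - r) = p ^ ((h : ℝ) / r - 1) := by
  have hr₀ : (r : ℝ) ≠ 0 := Nat.cast_ne_zero.2 hr
  rw [← Real.rpow_natCast, ← Real.rpow_mul hp, Nat.cast_sub hrh, mul_sub, inv_mul_cancel₀ hr₀,
    inv_mul_eq_div]

/-- If a finite loopless digraph admits an `h`-local `r`-multi-coloring (with some color set)
for positive integers `r < h`, then the fractional chromatic number of the underlying graph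
is at most `(h/r)^(h/r) / (h/r - 1)^(h/r - 1)` (real powers). -/
theorem stmt13 {V : Type} [Fintype V] (D : V → V → Prop) (hloop : ∀ v, ¬ D v v)
    (h r : ℕ) (hr : 0 < r) (hrh : r < h) (C : Type) (χ : V → Finset C)
    (hχ : IsHLocalMulti D h r χ) :
    fracChrom (underlying D) ≤
      ((h : ℝ) / r) ^ ((h : ℝ) / r) / ((h : ℝ) / r - 1) ^ ((h : ℝ) / r - 1) := by
  have hx : 1 < (h : ℝ) / r := (one_lt_div (by positivity)).2 (by exact_mod_cast hrh)
  set p : ℝ := 1 - ((h : ℝ) / r)⁻¹ with hp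
  have hp₀ : 0 < p := sub_pos.2 (inv_lt_one_of_one_lt₀ hx)
  have hp₁ : p < 1 := sub_lt_self 1 (inv_pos.2 (one_pos.trans hx))
  calc fracChrom (underlying D)
      ≤ 1 / ((p ^ (r : ℝ)⁻¹) ^ (h - r) * (1 - (p ^ (r : ℝ)⁻¹) ^ r)) :=
        hχ.fracChrom_le_one_div hloop hr.ne' (Real.rpow_pos_of_pos hp₀ _)
          (Real.rpow_lt_one hp₀.le hp₁ (by positivity))
    _ = 1 / (p ^ ((h : ℝ) / r - 1) * ((h : ℝ) / r)⁻¹) := by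
        rw [rpow_inv_natCast_pow_sub hp₀.le hr.ne' hrh.le,
          Real.rpow_inv_natCast_pow hp₀.le hr.ne', hp, sub_sub_cancel]
    _ = _ := one_div_one_sub_inv_rpow_mul_inv hx.le
end

section
/- For all positive integers m, h, r with m ≥ h and 2r ≤ h, the natural multi-coloring (Q,H) ↦ Q of the digraph U_d(m,h,r) is an h-local r-multi-coloring, and consequently ψ_d*(U_d(m,h,r)) ≤ h/r. -/
open Classical

/-- The vertex set of the digraph `U_d(m,h,r)`: pairs `(Q,H)` of disjoint subsets of `[m]`
with `|Q| = r` and `|H| = h - r`. -/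
abbrev UdVert2 (m h r : ℕ) :=
  {p : Finset (Fin m) × Finset (Fin m) //
    p.1.card = r ∧ p.2.card = h - r ∧ Disjoint p.1 p.2}

/-- The arc relation of `U_d(m,h,r)`: an arc from `(Q,H)` to `(Q',H')` iff `Q' ⊆ H`. -/
def UdArc2 (m h r : ℕ) (u v : UdVert2 m h r) : Prop := v.1.1 ⊆ u.1.2

/-!
Giving weight `1 / r` to every color class of an `r`-multi-coloring yields a fractional coloring.
The total weight of the classes meeting `N₊(v)` is then the number of colors seen on `N₊(v)`
divided by `r`, so if the multi-coloring is `h`-local, the local weight is at most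
`1 + (h - r) / r = h / r`. In `U_d(m,h,r)` the colors seen from `(Q,H)` all lie in `H`.
-/

open Finset

section LocalWeight

variable {V : Type*} [Fintype V] {D : V → V → Prop}

theorem localWeight_nonneg (f : FracColoring (underlying D)) : 0 ≤ localWeight D f := by
  refine add_nonneg zero_le_one (Real.iSup_nonneg fun v => ?_)
  rw [← sum_filter]
  exact sum_nonneg fun A _ => f.nonneg A

theorem fracDirLocal_le_localWeight (f : FracColoring (underlying D)) :
    fracDirLocal D ≤ localWeight D f := by
  refine csInf_le ⟨0, ?_⟩ ⟨f, rfl⟩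
  rintro _ ⟨g, rfl⟩
  exact localWeight_nonneg g

end LocalWeight

section ColorClass

variable {V C : Type*} [Fintype V]

/-- The color class of `c` in the multi-coloring `χ`: the set of vertices that receive `c`. -/
noncomputable def colorClass (χ : V → Finset C) (c : C) : Finset V := {v | c ∈ χ v}

theorem mem_colorClass {χ : V → Finset C} {c : C} {v : V} : v ∈ colorClass χ c ↔ c ∈ χ v := by
  simp [colorClass]

/-- The weight that the fractional coloring induced by an `r`-multi-coloring `χ` puts on a vertex
set: each color contributes `1 / r` to its class, with multiplicity when classes coincide. Only
the colors that `χ` uses are counted, so that `C` may be infinite. -/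
noncomputable def classWeight (r : ℕ) (χ : V → Finset C) (A : Finset V) : ℝ :=
  #{c ∈ univ.biUnion χ | colorClass χ c = A} / r

theorem classWeight_nonneg (r : ℕ) (χ : V → Finset C) (A : Finset V) : 0 ≤ classWeight r χ A := by
  unfold classWeight
  positivity

theorem exists_colorClass_eq_of_classWeight_ne_zero {r : ℕ} {χ : V → Finset C} {A : Finset V}
    (hA : classWeight r χ A ≠ 0) : ∃ c, colorClass χ c = A := by
  contrapose! hA
  simp [classWeight, hA]

theorem sum_classWeight (r : ℕ) (χ : V → Finset C) (𝒜 : Finset (Finset V)) :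
    ∑ A ∈ 𝒜, classWeight r χ A = #{c ∈ univ.biUnion χ | colorClass χ c ∈ 𝒜} / (r : ℝ) := by
  simp only [classWeight]
  rw [← sum_div, ← Nat.cast_sum, sum_card_fiberwise_eq_card_filter]

theorem sum_classWeight_filter_mem (r : ℕ) (χ : V → Finset C) (v : V) :
    ∑ A with v ∈ A, classWeight r χ A = #(χ v) / (r : ℝ) := by
  have colors_eq : {c ∈ univ.biUnion χ | colorClass χ c ∈ ({A | v ∈ A} : Finset (Finset V))} =
      χ v := by
    ext c
    simp only [mem_filter, mem_biUnion, mem_univ, true_and, mem_colorClass]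
    exact ⟨And.right, fun hc => ⟨⟨v, hc⟩, hc⟩⟩
  rw [sum_classWeight, colors_eq]

theorem sum_classWeight_filter_exists_mem (r : ℕ) (χ : V → Finset C) (p : V → Prop) :
    ∑ A with ∃ u ∈ A, p u, classWeight r χ A =
      #((univ.filter p).biUnion χ) / (r : ℝ) := by
  have colors_eq :
      {c ∈ univ.biUnion χ | colorClass χ c ∈ ({A | ∃ u ∈ A, p u} : Finset (Finset V))} =
        (univ.filter p).biUnion χ := by
    ext c
    simp only [mem_filter, mem_biUnion, mem_univ, true_and, mem_colorClass]
    exact ⟨fun ⟨_, u, hc, hu⟩ => ⟨u, hu, hc⟩, fun ⟨u, hu, hc⟩ => ⟨⟨u, hc⟩, u, hc, hu⟩⟩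
  rw [sum_classWeight, colors_eq]

end ColorClass

section MultiColoring

variable {V C : Type*} {D : V → V → Prop} {h r : ℕ} {χ : V → Finset C}

theorem IsMultiColoring.of_disjoint (hcard : ∀ v, #(χ v) = r)
    (hdisj : ∀ u v, D u v → Disjoint (χ u) (χ v)) : IsMultiColoring D r χ := by
  refine ⟨hcard, fun c u v hu hv hadj => ?_⟩
  rcases ((SimpleGraph.fromRel_adj D u v).1 hadj).2 with huv | hvu
  · exact disjoint_left.1 (hdisj u v huv) hu hv
  · exact disjoint_left.1 (hdisj v u hvu) hv hu

variable [Fintype V]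

theorem IsMultiColoring.isIndepF_colorClass (hχ : IsMultiColoring D r χ) (c : C) :
    IsIndepF (underlying D) (colorClass χ c) := fun u hu v hv =>
  hχ.2 c u v (mem_colorClass.1 hu) (mem_colorClass.1 hv)

/-- The fractional coloring induced by an `r`-multi-coloring, used to bound the fractional directed
local chromatic number by way of multi-colorings: every color class gets weight `1 / r`. -/
noncomputable def IsMultiColoring.fracColoring (hχ : IsMultiColoring D r χ) (hr : 0 < r) :
    FracColoring (underlying D) where
  x := classWeight r χ
  nonneg := classWeight_nonneg r χ
  supp A hA := by
    obtain ⟨c, rfl⟩ := exists_colorClass_eq_of_classWeight_ne_zero hA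
    exact hχ.isIndepF_colorClass c
  cover v := by
    rw [← sum_filter, sum_classWeight_filter_mem, hχ.1 v, div_self (by positivity)]

theorem IsMultiColoring.localWeight_fracColoring (hχ : IsMultiColoring D r χ) (hr : 0 < r) :
    localWeight D (hχ.fracColoring hr) =
      1 + ⨆ v, #((univ.filter (D v)).biUnion χ) / (r : ℝ) := by
  unfold localWeight
  congr! 3 with v
  rw [← sum_filter]
  exact sum_classWeight_filter_exists_mem r χ (D v)

theorem IsMultiColoring.isHLocalMulti_of_subset {S : V → Finset C} (hχ : IsMultiColoring D r χ)
    (hcard : ∀ v, #(S v) ≤ h - r) (hsub : ∀ u v, D u v → χ v ⊆ S u) : IsHLocalMulti D h r χ :=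
  ⟨hχ, fun v => (card_le_card (biUnion_subset.2 fun u hu =>
    hsub v u (mem_filter.1 hu).2)).trans (hcard v)⟩

theorem IsHLocalMulti.localWeight_fracColoring_le (hχ : IsHLocalMulti D h r χ) (hr : 0 < r)
    (hrh : r ≤ h) : localWeight D (hχ.1.fracColoring hr) ≤ h / r := by
  have colors_le (v : V) :
      #((univ.filter (D v)).biUnion χ) / (r : ℝ) ≤ (h - r : ℕ) / r := by
    gcongr
    exact hχ.2 v
  calc localWeight D (hχ.1.fracColoring hr)
      = 1 + ⨆ v, #((univ.filter (D v)).biUnion χ) / (r : ℝ) := hχ.1.localWeight_fracColoring hr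
    _ ≤ 1 + (h - r : ℕ) / r := by
      gcongr
      exact Real.iSup_le colors_le (by positivity)
    _ = h / r := by
      rw [Nat.cast_sub hrh]
      field_simp
      ring

theorem IsHLocalMulti.fracDirLocal_le (hχ : IsHLocalMulti D h r χ) (hr : 0 < r) (hrh : r ≤ h) :
    fracDirLocal D ≤ h / r :=
  (fracDirLocal_le_localWeight _).trans (hχ.localWeight_fracColoring_le hr hrh)

end MultiColoring

section NaturalColoring

variable {m h r : ℕ}

theorem UdArc2.disjoint_fst {u v : UdVert2 m h r} (huv : UdArc2 m h r u v) :
    Disjoint u.1.1 v.1.1 :=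
  u.2.2.2.mono_right huv

theorem isMultiColoring_udArc2_fst :
    IsMultiColoring (UdArc2 m h r) r (fun v : UdVert2 m h r => v.1.1) :=
  .of_disjoint (fun v => v.2.1) fun _ _ => UdArc2.disjoint_fst

theorem isHLocalMulti_udArc2_fst :
    IsHLocalMulti (UdArc2 m h r) h r (fun v : UdVert2 m h r => v.1.1) :=
  isMultiColoring_udArc2_fst.isHLocalMulti_of_subset (fun v => v.2.2.1.le) fun _ _ huv => huv

end NaturalColoring

/-- For positive integers `m ≥ h ≥ 2r`, the natural multi-coloring `(Q,H) ↦ Q` of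
`U_d(m,h,r)` is an `h`-local `r`-multi-coloring, and consequently
`ψ_d*(U_d(m,h,r)) ≤ h/r`. -/
theorem stmt17 (m h r : ℕ) (hr : 0 < r) (hrh : 2 * r ≤ h) (hm : h ≤ m) :
    IsHLocalMulti (UdArc2 m h r) h r (fun v : UdVert2 m h r => v.1.1) ∧
      fracDirLocal (UdArc2 m h r) ≤ (h : ℝ) / r :=
  ⟨isHLocalMulti_udArc2_fst, isHLocalMulti_udArc2_fst.fracDirLocal_le hr (by omega)⟩
end

section
/- For all positive integers m, h, r with m ≥ h and 2r ≤ h ≤ 2·(h−r) (i.e., r ≤ h/2), the fractional chromatic number of the underlying undirected graph of U_d(m,h,r) satisfies χ*(U_d(m,h,r)) ≥ (1 − h/m)^h · (h/r)^{h/r} / (h/r − 1)^{h/r − 1}, where the powers with non-integer exponents are real powers. -/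
open Classical

/-!
An independent set `A` of `U_d(m,h,r)` lies in `𝒬 × 𝓗`, where no `r`-set of `𝒬` is contained in an
`(h-r)`-set of `𝓗`. The members of `𝓗` thus belong to the down-set `S` of sets containing no member
of `𝒬`. Let `μₙ` be the probability that a uniformly random `n`-tuple of elements of `[m]` has range
in `S`. The sequence `μₙ ^ (1/n)` is nonincreasing (a Loomis–Whitney or Kruskal–Katona type
inequality, proved by induction over links), so if a random `r`-tuple has range in `𝒬` with
probability `x`, then `μᵣ ≤ 1 - x`, and the range of a random `(h-r)`-tuple is in `𝓗` with
probability at most `(1-x) ^ (h/r-1)`. With `k = h/r`, the maximum of `x (1-x) ^ (k-1)` over `[0,1]`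
is `(k-1) ^ (k-1) / k ^ k`, so `|A| r! (h-r)! / m ^ h` is at most this. Finally, `χ*` is at least
the number of vertices divided by the independence number, and the number of vertices times
`r! (h-r)!` is the falling factorial `m (m-1) ⋯ (m-h+1) ≥ (m-h) ^ h`.
-/

open Finset
open scoped Nat NNReal

section Inequalities

lemma pow_sum_le_mul_pow_sum {ι : Type*} (s : Finset ι) {x y : ι → ℝ≥0} {c : ℝ≥0} {p : ℕ}
    (hp : p ≠ 0) (h : ∀ i ∈ s, x i ^ p ≤ c * y i ^ p) :
    (∑ i ∈ s, x i) ^ p ≤ c * (∑ i ∈ s, y i) ^ p := by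
  obtain ⟨t, rfl⟩ : ∃ t : ℝ≥0, t ^ p = c := ⟨c ^ (p⁻¹ : ℝ), NNReal.rpow_inv_natCast_pow c hp⟩
  have le_mul (i) (hi : i ∈ s) : x i ≤ t * y i :=
    le_of_pow_le_pow_left₀ hp zero_le ((h i hi).trans_eq (mul_pow _ _ _).symm)
  calc (∑ i ∈ s, x i) ^ p ≤ (∑ i ∈ s, t * y i) ^ p := by gcongr with i hi; exact le_mul i hi
    _ = t ^ p * (∑ i ∈ s, y i) ^ p := by rw [← mul_sum, mul_pow]

lemma mul_one_sub_rpow_le {t x : ℝ} (ht : 0 < t) (hx0 : 0 ≤ x) (hx1 : x ≤ 1) :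
    x * (1 - x) ^ t ≤ t ^ t / (1 + t) ^ (1 + t) := by
  have hy : 0 ≤ 1 - x := sub_nonneg.2 hx1
  have am_gm : ((1 + t) * x) ^ (1 / (1 + t)) * ((1 + t) / t * (1 - x)) ^ (t / (1 + t)) ≤ 1 := by
    refine (Real.geom_mean_le_arith_mean2_weighted (by positivity) (by positivity)
      (by positivity) (by positivity) (by field_simp)).trans_eq ?_
    field_simp
    ring
  have raised : (1 + t) * x * ((1 + t) / t * (1 - x)) ^ t ≤ 1 := by
    have := Real.rpow_le_one (by positivity) am_gm (by positivity : 0 ≤ 1 + t)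
    rwa [Real.mul_rpow (by positivity) (by positivity), ← Real.rpow_mul (by positivity),
      ← Real.rpow_mul (by positivity), div_mul_cancel₀ _ (by positivity),
      div_mul_cancel₀ _ (by positivity), Real.rpow_one] at this
  rw [le_div_iff₀ (by positivity)]
  rw [Real.mul_rpow (by positivity) hy, Real.div_rpow (by positivity) ht.le] at raised
  calc x * (1 - x) ^ t * (1 + t) ^ (1 + t)
      = (1 + t) * x * ((1 + t) ^ t / t ^ t * (1 - x) ^ t) * t ^ t := by
        rw [Real.rpow_one_add' (by positivity) (by positivity)]
        field_simp
    _ ≤ 1 * t ^ t := by gcongr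
    _ = t ^ t := one_mul _

lemma one_sub_div_pow_le_descFactorial_div_pow {m h : ℕ} (hm : h ≤ m) :
    (1 - (h : ℝ) / m) ^ h ≤ m.descFactorial h / (m : ℝ) ^ h := by
  rcases m.eq_zero_or_pos with rfl | hm0
  · obtain rfl : h = 0 := by omega
    simp
  have nat_bound : (m - h) ^ h ≤ m.descFactorial h :=
    (Nat.pow_le_pow_left (by omega) h).trans (Nat.pow_sub_le_descFactorial m h)
  rw [one_sub_div (by positivity), div_pow, ← Nat.cast_sub hm]
  gcongr
  exact_mod_cast nat_bound

end Inequalities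

section Tuples

variable {α : Type*} [DecidableEq α] {S T : Set (Finset α)}

/-- The link of `a` in a set system `S`. Unlike for simplicial complexes, its members may contain
`a`, because it describes the tuples continuing `a` in `tupleCount`, where entries may repeat. -/
def link (S : Set (Finset α)) (a : α) : Set (Finset α) := {s | insert a s ∈ S}

lemma link_subset (hS : IsLowerSet S) (a : α) : link S a ⊆ S :=
  fun s hs ↦ hS (subset_insert a s) hs

lemma isLowerSet_link (hS : IsLowerSet S) (a : α) : IsLowerSet (link S a) :=
  fun _ _ hts hs ↦ hS (insert_subset_insert a hts) hs

variable [Fintype α]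

/-- The number of `n`-tuples, with repetitions allowed, whose set of entries belongs to `S`. -/
noncomputable def tupleCount (S : Set (Finset α)) (n : ℕ) : ℕ :=
  #{f : Fin n → α | univ.image f ∈ S}

lemma tupleCount_zero (hS : ∅ ∈ S) : tupleCount S 0 = 1 := by
  simp [tupleCount, hS]

lemma tupleCount_empty (n : ℕ) : tupleCount (∅ : Set (Finset α)) n = 0 := by
  simp [tupleCount]

lemma tupleCount_mono (h : S ⊆ T) (n : ℕ) : tupleCount S n ≤ tupleCount T n :=
  card_le_card (monotone_filter_right _ fun _ _ hf ↦ h hf)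

lemma tupleCount_add_le (h : Disjoint S T) (n : ℕ) :
    tupleCount S n + tupleCount T n ≤ Fintype.card α ^ n := by
  rw [tupleCount, tupleCount, ← card_union_of_disjoint]
  · simpa using card_le_univ (α := Fin n → α) _
  · exact disjoint_filter.2 fun _ _ hS hT ↦ Set.disjoint_left.1 h hS hT

lemma tupleCount_succ (S : Set (Finset α)) (n : ℕ) :
    tupleCount S (n + 1) = ∑ a, tupleCount (link S a) n := by
  have image_cons (a : α) (f : Fin n → α) :
      univ.image (Fin.cons a f : Fin (n + 1) → α) = insert a (univ.image f) := by
    ext b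
    simp [Fin.exists_fin_succ, eq_comm]
  simp only [tupleCount, card_filter, link, Set.mem_ofPred_eq, ← image_cons]
  rw [← Fintype.sum_prod_type']
  exact ((Fin.consEquiv fun _ ↦ α).sum_comp fun f ↦ if univ.image f ∈ S then 1 else 0).symm

lemma tupleCount_succ_pow_le (hS : IsLowerSet S) (h0 : ∅ ∈ S) (n : ℕ) :
    tupleCount S (n + 1) ^ n ≤ tupleCount S n ^ (n + 1) := by
  induction n generalizing S with
  | zero => simp [tupleCount_zero h0]
  | succ n ih =>
    have link_bound (a : α) : tupleCount (link S a) (n + 1) ^ (n + 1) ≤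
        tupleCount S (n + 1) * tupleCount (link S a) n ^ (n + 1) := by
      by_cases ha : ∅ ∈ link S a
      · rw [pow_succ']
        exact Nat.mul_le_mul (tupleCount_mono (link_subset hS a) _) (ih (isLowerSet_link hS a) ha)
      · have : link S a = ∅ := Set.eq_empty_of_forall_notMem fun s hs ↦
          ha (isLowerSet_link hS a (empty_subset s) hs)
        simp [this, tupleCount_empty]
    calc tupleCount S (n + 2) ^ (n + 1)
        = (∑ a, tupleCount (link S a) (n + 1)) ^ (n + 1) := by rw [tupleCount_succ]
      _ ≤ tupleCount S (n + 1) * (∑ a, tupleCount (link S a) n) ^ (n + 1) := by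
        exact_mod_cast pow_sum_le_mul_pow_sum univ n.succ_ne_zero
          (x := fun a ↦ tupleCount (link S a) (n + 1)) (y := fun a ↦ tupleCount (link S a) n)
          (c := tupleCount S (n + 1)) fun a _ ↦ by exact_mod_cast link_bound a
      _ = tupleCount S (n + 1) ^ (n + 2) := by rw [← tupleCount_succ, ← pow_succ']

lemma tupleCount_pow_le_pow (hS : IsLowerSet S) (h0 : ∅ ∈ S) {r n : ℕ} (hrn : r ≤ n) :
    tupleCount S n ^ r ≤ tupleCount S r ^ n := by
  induction n, hrn using Nat.le_induction with
  | base => rfl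
  | succ n hrn ih =>
    rcases n.eq_zero_or_pos with rfl | hn
    · obtain rfl : r = 0 := by omega
      simp [tupleCount_zero h0]
    refine le_of_pow_le_pow_left₀ hn.ne' (Nat.zero_le _) ?_
    calc (tupleCount S (n + 1) ^ r) ^ n = (tupleCount S (n + 1) ^ n) ^ r := pow_right_comm _ _ _
      _ ≤ (tupleCount S n ^ (n + 1)) ^ r := Nat.pow_le_pow_left (tupleCount_succ_pow_le hS h0 n) r
      _ = (tupleCount S n ^ r) ^ (n + 1) := pow_right_comm _ _ _
      _ ≤ (tupleCount S r ^ n) ^ (n + 1) := by gcongr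
      _ = (tupleCount S r ^ (n + 1)) ^ n := pow_right_comm _ _ _

lemma factorial_card_le_card_image_eq (s : Finset α) {n : ℕ} (hs : #s = n) :
    n ! ≤ #{f : Fin n → α | univ.image f = s} := by
  have image_equiv (e : Fin n ≃ s) : univ.image (fun i ↦ (e i : α)) = s := by
    ext a
    simp [← e.surjective.exists (p := fun b ↦ (b : α) = a)]
  calc n ! = Fintype.card (Fin n ≃ s) := by
        rw [Fintype.card_equiv (s.equivFinOfCardEq hs).symm, Fintype.card_fin]
    _ ≤ #{f : Fin n → α | univ.image f = s} :=
        card_le_card_of_injOn (s := univ) (fun e i ↦ (e i : α))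
          (fun e _ ↦ by simpa using image_equiv e)
          fun e _ e' _ h ↦ Equiv.ext fun i ↦ Subtype.ext (congrFun h i)

lemma factorial_mul_card_le_tupleCount {n : ℕ} {𝒜 : Finset (Finset α)}
    (h𝒜 : ∀ s ∈ 𝒜, #s = n) : n ! * #𝒜 ≤ tupleCount (𝒜 : Set (Finset α)) n := by
  calc n ! * #𝒜 = ∑ _s ∈ 𝒜, n ! := by rw [sum_const, smul_eq_mul, mul_comm]
    _ ≤ ∑ s ∈ 𝒜, #{f : Fin n → α | univ.image f = s} :=
        sum_le_sum fun s hs ↦ factorial_card_le_card_image_eq s (h𝒜 s hs)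
    _ = tupleCount (𝒜 : Set (Finset α)) n := by
        rw [tupleCount, card_eq_sum_card_fiberwise (f := fun f ↦ univ.image f) (t := 𝒜)
          fun f hf ↦ by simpa using hf]
        refine sum_congr rfl fun s hs ↦ congrArg card ?_
        ext f
        simp only [mem_filter, mem_univ, true_and, mem_coe]
        exact ⟨fun hf ↦ ⟨hf ▸ hs, hf⟩, fun hf ↦ hf.2⟩

/-- The probability that the set of entries of a uniformly random `n`-tuple belongs to `S`, or
`0` if there are no `n`-tuples. -/
noncomputable def tupleDensity (S : Set (Finset α)) (n : ℕ) : ℝ :=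
  tupleCount S n / (Fintype.card α : ℝ) ^ n

lemma tupleDensity_nonneg (S : Set (Finset α)) (n : ℕ) : 0 ≤ tupleDensity S n := by
  unfold tupleDensity
  positivity

lemma tupleDensity_mono (h : S ⊆ T) (n : ℕ) : tupleDensity S n ≤ tupleDensity T n := by
  unfold tupleDensity
  gcongr
  exact tupleCount_mono h n

lemma tupleDensity_add_le_one (h : Disjoint S T) (n : ℕ) :
    tupleDensity S n + tupleDensity T n ≤ 1 := by
  rw [tupleDensity, tupleDensity, ← add_div]
  exact div_le_one_of_le₀ (mod_cast tupleCount_add_le h n) (by positivity)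

lemma tupleDensity_le_rpow (hS : IsLowerSet S) (h0 : ∅ ∈ S) {r n : ℕ} (hr : 0 < r)
    (hrn : r ≤ n) : tupleDensity S n ≤ tupleDensity S r ^ ((n : ℝ) / r) := by
  have pow_le_pow : tupleDensity S n ^ r ≤ tupleDensity S r ^ n := by
    rw [tupleDensity, tupleDensity, div_pow, div_pow, pow_right_comm]
    gcongr
    exact_mod_cast tupleCount_pow_le_pow hS h0 hrn
  refine le_of_pow_le_pow_left₀ hr.ne' (Real.rpow_nonneg (tupleDensity_nonneg S r) _) ?_
  rwa [← Real.rpow_mul_natCast (tupleDensity_nonneg S r), div_mul_cancel₀ _ (by positivity),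
    Real.rpow_natCast]

lemma factorial_mul_card_div_le_tupleDensity {n : ℕ} {𝒜 : Finset (Finset α)}
    (h𝒜 : ∀ s ∈ 𝒜, #s = n) :
    (n ! * #𝒜 : ℝ) / (Fintype.card α : ℝ) ^ n ≤ tupleDensity (𝒜 : Set (Finset α)) n := by
  unfold tupleDensity
  gcongr
  exact_mod_cast factorial_mul_card_le_tupleCount h𝒜

end Tuples

theorem card_div_mul_card_div_le_of_forall_not_subset {α : Type*} [Fintype α] {r s : ℕ}
    (hr : 0 < r) (hrs : r ≤ s) {𝒬 𝓗 : Finset (Finset α)}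
    (h𝒬 : ∀ Q ∈ 𝒬, #Q = r) (h𝓗 : ∀ H ∈ 𝓗, #H = s)
    (hsub : ∀ Q ∈ 𝒬, ∀ H ∈ 𝓗, ¬ Q ⊆ H) :
    (r ! * #𝒬 : ℝ) / (Fintype.card α : ℝ) ^ r * ((s ! * #𝓗 : ℝ) / (Fintype.card α : ℝ) ^ s) ≤
      ((s : ℝ) / r) ^ ((s : ℝ) / r) / (1 + (s : ℝ) / r) ^ (1 + (s : ℝ) / r) := by
  let S : Set (Finset α) := {B | ∀ Q ∈ 𝒬, ¬ Q ⊆ B}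
  have lower : IsLowerSet S := fun _ _ hCB hB Q hQ hQC ↦ hB Q hQ (hQC.trans hCB)
  have empty_mem : ∅ ∈ S := fun Q hQ hQe ↦ by
    simp [← h𝒬 Q hQ, subset_empty.1 hQe] at hr
  have h𝓗S : (𝓗 : Set (Finset α)) ⊆ S := fun H hH Q hQ ↦ hsub Q hQ H hH
  have disj : Disjoint (𝒬 : Set (Finset α)) S :=
    Set.disjoint_left.2 fun Q hQ hQS ↦ hQS Q hQ Subset.rfl
  set x := tupleDensity (𝒬 : Set (Finset α)) r
  have x_nonneg : 0 ≤ x := tupleDensity_nonneg _ _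
  have density_S_le : tupleDensity S r ≤ 1 - x := by linarith [tupleDensity_add_le_one disj r]
  have density_S_nonneg := tupleDensity_nonneg S r
  calc (r ! * #𝒬 : ℝ) / (Fintype.card α : ℝ) ^ r * ((s ! * #𝓗 : ℝ) / (Fintype.card α : ℝ) ^ s)
      ≤ x * tupleDensity (𝓗 : Set (Finset α)) s := by
        gcongr <;> exact factorial_mul_card_div_le_tupleDensity ‹_›
    _ ≤ x * tupleDensity S s := by gcongr; exact tupleDensity_mono h𝓗S s
    _ ≤ x * tupleDensity S r ^ ((s : ℝ) / r) := by
        gcongr; exact tupleDensity_le_rpow lower empty_mem hr hrs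
    _ ≤ x * (1 - x) ^ ((s : ℝ) / r) := by gcongr
    _ ≤ _ := mul_one_sub_rpow_le (div_pos (mod_cast hr.trans_le hrs) (mod_cast hr)) x_nonneg
        (by linarith)

section FractionalColoring

lemma isIndepF_singleton {V : Type*} (G : SimpleGraph V) (v : V) : IsIndepF G {v} := by
  simp [IsIndepF]

variable {V : Type*} [Fintype V] {G : SimpleGraph V}

lemma FracColoring.card_le_mul_totalWeight (f : FracColoring G) {c : ℝ}
    (hc : ∀ A, IsIndepF G A → (#A : ℝ) ≤ c) : (Fintype.card V : ℝ) ≤ c * totalWeight f := by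
  calc (Fintype.card V : ℝ) = ∑ _v : V, (1 : ℝ) := by simp
    _ ≤ ∑ v, ∑ A, if v ∈ A then f.x A else 0 := sum_le_sum fun v _ ↦ f.cover v
    _ = ∑ A, ∑ v, if v ∈ A then f.x A else 0 := sum_comm
    _ = ∑ A, (#A : ℝ) * f.x A := by simp
    _ ≤ ∑ A, c * f.x A := by
        refine sum_le_sum fun A _ ↦ ?_
        by_cases hA : f.x A = 0
        · simp [hA]
        · exact mul_le_mul_of_nonneg_right (hc A (f.supp A hA)) (f.nonneg A)
    _ = c * totalWeight f := by rw [totalWeight, mul_sum]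

/-- The fractional coloring giving weight `1` to every independent set, showing that the infimum in
`fracChrom` is over a nonempty set. -/
noncomputable def FracColoring.allIndep (G : SimpleGraph V) : FracColoring G where
  x A := if IsIndepF G A then 1 else 0
  nonneg A := by split_ifs <;> norm_num
  supp A hA := by simpa using hA
  cover v := by
    refine le_trans ?_ (single_le_sum (fun A _ ↦ ?_) (mem_univ {v}))
    · simp [isIndepF_singleton]
    · split_ifs <;> norm_num

theorem card_div_le_fracChrom {c : ℝ} (hc : ∀ A, IsIndepF G A → (#A : ℝ) ≤ c) :
    Fintype.card V / c ≤ fracChrom G := by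
  have c_nonneg : 0 ≤ c := by simpa using hc ∅ (by simp [IsIndepF])
  refine le_csInf ⟨_, FracColoring.allIndep G, rfl⟩ ?_
  rintro _ ⟨f, rfl⟩
  refine div_le_of_le_mul₀ c_nonneg (sum_nonneg fun A _ ↦ f.nonneg A) ?_
  rw [mul_comm]
  exact f.card_le_mul_totalWeight hc

end FractionalColoring

section UniversalDigraph

lemma card_filter_disjoint_prod {α : Type*} [Fintype α] [DecidableEq α] (r s : ℕ) :
    #{p : Finset α × Finset α | #p.1 = r ∧ #p.2 = s ∧ Disjoint p.1 p.2} =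
      (Fintype.card α).choose r * (Fintype.card α - r).choose s := by
  have fiber (Q : Finset α) (hQ : Q ∈ powersetCard r univ) :
      #(powersetCard s Qᶜ) = (Fintype.card α - r).choose s := by
    rw [card_powersetCard, card_compl, (mem_powersetCard.1 hQ).2]
  calc _ = #((powersetCard r (univ : Finset α)).sigma fun Q ↦ powersetCard s Qᶜ) := by
        refine card_bij' (fun p _ ↦ ⟨p.1, p.2⟩) (fun p _ ↦ (p.1, p.2)) ?_ ?_ ?_ ?_ <;>
          simp +contextual [mem_powersetCard, subset_compl_iff_disjoint_left]
    _ = _ := by rw [card_sigma, sum_congr rfl fiber]; simp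

lemma card_udVert2_mul_factorial {m h r : ℕ} (hrh : r ≤ h) :
    Fintype.card (UdVert2 m h r) * (r ! * (h - r)!) = m.descFactorial h := by
  rw [Fintype.card_subtype, card_filter_disjoint_prod, Fintype.card_fin,
    ← Nat.descFactorial_mul_descFactorial hrh, Nat.descFactorial_eq_factorial_mul_choose,
    Nat.descFactorial_eq_factorial_mul_choose]
  ring

variable {m h r : ℕ} {A : Finset (UdVert2 m h r)}

lemma not_subset_of_isIndepF_udArc2 (hr : 0 < r) (hA : IsIndepF (underlying (UdArc2 m h r)) A)
    {u v : UdVert2 m h r} (hu : u ∈ A) (hv : v ∈ A) : ¬ v.1.1 ⊆ u.1.2 := by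
  intro hsub
  rcases eq_or_ne u v with rfl | huv
  · have : u.1.1 = ∅ := disjoint_self.1 (u.2.2.2.mono_right hsub)
    simp [← u.2.1, this] at hr
  · exact hA u hu v hv ((SimpleGraph.fromRel_adj _ _ _).2 ⟨huv, Or.inl hsub⟩)

lemma card_le_card_image_fst_mul_card_image_snd (A : Finset (UdVert2 m h r)) :
    #A ≤ #(A.image fun v ↦ v.1.1) * #(A.image fun v ↦ v.1.2) := by
  rw [← card_product]
  refine card_le_card_of_injOn Subtype.val (fun v hv ↦ ?_) Subtype.val_injective.injOn
  exact mem_product.2 ⟨mem_image_of_mem _ hv, mem_image_of_mem _ hv⟩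

theorem card_mul_factorial_div_le_of_isIndepF_udArc2 (hr : 0 < r) (hrh : 2 * r ≤ h)
    (hA : IsIndepF (underlying (UdArc2 m h r)) A) :
    (#A * (r ! * (h - r)!) : ℝ) / (m : ℝ) ^ h ≤
      ((h : ℝ) / r - 1) ^ ((h : ℝ) / r - 1) / ((h : ℝ) / r) ^ ((h : ℝ) / r) := by
  set 𝒬 := A.image fun v ↦ v.1.1 with h𝒬
  set 𝓗 := A.image fun v ↦ v.1.2 with h𝓗
  have cross := card_div_mul_card_div_le_of_forall_not_subset (𝒬 := 𝒬) (𝓗 := 𝓗) hr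
    (by omega : r ≤ h - r) (by simp +contextual [h𝒬]) (by simp +contextual [h𝓗])
    (forall_mem_image.2 fun v hv ↦ forall_mem_image.2 fun u hu ↦
      not_subset_of_isIndepF_udArc2 hr hA hu hv)
  have card_A : (#A : ℝ) ≤ #𝒬 * #𝓗 := mod_cast card_le_card_image_fst_mul_card_image_snd A
  have ratio : ((h - r : ℕ) : ℝ) / r = (h : ℝ) / r - 1 := by
    rw [Nat.cast_sub (by omega), sub_div, div_self (by positivity)]
  rw [ratio, add_sub_cancel, Fintype.card_fin, div_mul_div_comm, ← pow_add,
    Nat.add_sub_cancel' (by omega)] at cross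
  calc (#A * (r ! * (h - r)!) : ℝ) / (m : ℝ) ^ h
      ≤ (#𝒬 * #𝓗) * (r ! * (h - r)!) / (m : ℝ) ^ h := by gcongr
    _ = r ! * #𝒬 * ((h - r)! * #𝓗) / (m : ℝ) ^ h := by ring
    _ ≤ _ := cross

end UniversalDigraph

/-- For positive integers `m ≥ h ≥ 2r`, the fractional chromatic number of (the underlying
undirected graph of) `U_d(m,h,r)` is at least
`(1 - h/m)^h · (h/r)^(h/r) / (h/r - 1)^(h/r - 1)`, with real powers in the non-integer
exponents. -/
theorem stmt19 (m h r : ℕ) (hr : 0 < r) (hrh : 2 * r ≤ h) (hm : h ≤ m) :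
    (1 - (h : ℝ) / m) ^ h *
        (((h : ℝ) / r) ^ ((h : ℝ) / r) / ((h : ℝ) / r - 1) ^ ((h : ℝ) / r - 1)) ≤
      fracChrom (underlying (UdArc2 m h r)) := by
  have hm_pos : 0 < m := by omega
  have ratio_pos : 0 < (h : ℝ) / r - 1 := by
    rw [sub_pos, one_lt_div (by positivity)]
    exact_mod_cast (by omega : r < h)
  have ratio_pos' : 0 < (h : ℝ) / r := by linarith
  set k : ℝ := (h : ℝ) / r
  set c : ℝ := (k - 1) ^ (k - 1) / k ^ k * (m : ℝ) ^ h / (r ! * (h - r)!) with hc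
  have indep_bound (A) (hA : IsIndepF (underlying (UdArc2 m h r)) A) : (#A : ℝ) ≤ c := by
    rw [hc, le_div_iff₀ (by positivity), ← div_le_iff₀ (by positivity)]
    exact card_mul_factorial_div_le_of_isIndepF_udArc2 hr hrh hA
  calc (1 - (h : ℝ) / m) ^ h * (k ^ k / (k - 1) ^ (k - 1))
      ≤ m.descFactorial h / (m : ℝ) ^ h * (k ^ k / (k - 1) ^ (k - 1)) := by
        gcongr
        exact one_sub_div_pow_le_descFactorial_div_pow hm
    _ = Fintype.card (UdVert2 m h r) / c := by
        rw [hc, ← card_udVert2_mul_factorial (by omega : r ≤ h)]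
        push_cast
        field_simp
    _ ≤ fracChrom (underlying (UdArc2 m h r)) := card_div_le_fracChrom indep_bound
end
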